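/- Let f : 𝒮 → ℝ and define the additive distributional preference by S ≿ S' iff Σ_{s ∈ S} f(s) ≥ Σ_{s ∈ S'} f(s). Then ≿ satisfies the upper-bound property, the maximizer property, and the improvement property. -/

import Mathlib

open Finset

variable {α : Type*}

/-- Strict part of a distributional preference. -/
def strictPref (pref : Finset α → Finset α → Prop) (A B : Finset α) : Prop :=
  pref A B ∧ ¬ pref B A

/-- Indifference part of a distributional preference. -/
def indiffPref (pref : Finset α → Finset α → Prop) (A B : Finset α) : Prop :=
  pref A B ∧ pref B A

/-- Incomparability under a distributional preference. -/
def incomparable (pref : Finset α → Finset α → Prop) (A B : Finset α) : Prop :=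
  ¬ pref A B ∧ ¬ pref B A

/-- `NW q S` is the collection of non-wasteful subsets of `S`. -/
def NW (q : ℕ) (S : Finset α) : Set (Finset α) :=
  {T | T ⊆ S ∧ T.card = min q S.card}

/-- The frontier of `S`: non-wasteful subsets undominated w.r.t. the preference. -/
def frontierSet (pref : Finset α → Finset α → Prop) (q : ℕ) (S : Finset α) :
    Set (Finset α) :=
  {T | T ∈ NW q S ∧ ∀ T' ∈ NW q S, ¬ strictPref pref T' T}

/-- The upper-bound property of a distributional preference. -/
def upperBoundProperty [DecidableEq α] (pref : Finset α → Finset α → Prop) (q : ℕ) : Prop :=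
  ∀ S S' : Finset α, S.card = q → S'.card = q → incomparable pref S S' →
    ∃ S'' ∈ NW q (S ∪ S'), strictPref pref S'' S ∨ strictPref pref S'' S'

/-- The maximizer property of a distributional preference. -/
def maximizerProperty [DecidableEq α] (pref : Finset α → Finset α → Prop) (q : ℕ) : Prop :=
  ∀ S S' : Finset α, S ≠ S' → S.card = q → S'.card = q →
    (∀ S'' ∈ NW q (S ∪ S'), pref S S'' ∧ pref S' S'') →
    ∃ s ∈ S \ S', ∃ s' ∈ S' \ S,
      indiffPref pref (S.erase s ∪ {s'}) S ∧ indiffPref pref (S'.erase s' ∪ {s}) S'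

/-- The improvement property of a distributional preference. -/
def improvementProperty [DecidableEq α] (pref : Finset α → Finset α → Prop) (q : ℕ) : Prop :=
  ∀ S S' : Finset α, S.card = q → S'.card = q → ∀ s ∈ S \ S',
    (∀ S'' ∈ NW q (S ∪ S'), s ∉ S'' → strictPref pref S S'') →
    (∀ S'' ∈ NW q (S ∪ S'), s ∈ S'' → pref S S'') →
    ∃ s' ∈ S' \ S, strictPref pref (S'.erase s' ∪ {s}) S'

/-- A choice rule is non-wasteful. -/
def nonWasteful (q : ℕ) (Ch : Finset α → Finset α) : Prop :=
  ∀ S : Finset α, (Ch S).card = min q S.card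

/-- A choice rule promotes the distributional preference. -/
def promotesPref (pref : Finset α → Finset α → Prop) (Ch : Finset α → Finset α) : Prop :=
  ∀ S : Finset α, ∀ S' ⊆ S, S'.card = (Ch S).card → ¬ strictPref pref S' (Ch S)

/-- A choice rule guarantees no justified envy with respect to priority ranking `π`. -/
def noJustifiedEnvy [DecidableEq α] (pref : Finset α → Finset α → Prop)
    (π : α → α → Prop) (Ch : Finset α → Finset α) : Prop :=
  ∀ S : Finset α, ∀ s ∈ Ch S, ∀ s' ∈ S \ Ch S,
    pref ((Ch S).erase s ∪ {s'}) (Ch S) → π s s'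

/-- Path independence of a choice rule. -/
def pathIndependent [DecidableEq α] (Ch : Finset α → Finset α) : Prop :=
  ∀ S S' : Finset α, Ch (S ∪ S') = Ch (Ch S ∪ S')

/-- Consistency of a choice rule. -/
def consistentRule [DecidableEq α] (Ch : Finset α → Finset α) : Prop :=
  ∀ S : Finset α, ∀ s ∈ S, s ∉ Ch S → Ch (S.erase s) = Ch S

/-- Substitutability of a choice rule. -/
def substitutableRule [DecidableEq α] (Ch : Finset α → Finset α) : Prop :=
  ∀ S : Finset α, ∀ s ∈ S, ∀ s' ∈ S, s ≠ s' → s ∈ Ch S → s ∈ Ch (S.erase s')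

/-- `l` lists the elements of `A` in strictly decreasing `π`-priority. -/
def descList [DecidableEq α] (π : α → α → Prop) (A : Finset α) (l : List α) : Prop :=
  l.Pairwise π ∧ l.Nodup ∧ l.toFinset = A

/-- `A` priority dominates `B` with respect to `π`. -/
def priorityDominates [DecidableEq α] (π : α → α → Prop) (A B : Finset α) : Prop :=
  B.card ≤ A.card ∧
  ∀ la lb : List α, descList π A la → descList π B lb →
    ∀ (k : ℕ) (ha : k < la.length) (hb : k < lb.length),
      la.get ⟨k, ha⟩ = lb.get ⟨k, hb⟩ ∨ π (la.get ⟨k, ha⟩) (lb.get ⟨k, hb⟩)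

/-- The revealed preference axiom for a choice rule: no revealed-priority cycles. -/
def revealedPrefAxiom [DecidableEq α] (pref : Finset α → Finset α → Prop)
    (Ch : Finset α → Finset α) : Prop :=
  ¬ ∃ (K : ℕ) (s : ℕ → α) (T : ℕ → Finset α), 0 < K ∧ s K = s 0 ∧
    ∀ k < K, s k ∈ Ch (T k) ∧ s (k + 1) ∈ T k \ Ch (T k) ∧
      pref ((Ch (T k)).erase (s k) ∪ {s (k + 1)}) (Ch (T k))

/-!
Exchanging a member `s` of a set for an outsider `t` changes an additive value by `f t - f s`,
whatever the rest of the set is, so the same exchange carried out in `S` and backwards in `S'` has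
opposite effects. An exchange of an element of `S \ S'` with one of `S' \ S` stays inside `S ∪ S'`,
so a set that is optimal there pins down the sign of the effect, and this sign transfers to the
other set.
-/

section Responsive

variable [DecidableEq α] {pref : Finset α → Finset α → Prop} {r : α → α → Prop}
  {S S' U : Finset α} {s t : α}

theorem sdiff_nonempty_of_ne_of_card_le (hne : S ≠ S') (hcard : S'.card ≤ S.card) :
    (S \ S').Nonempty :=
  sdiff_nonempty.2 fun hsub => hne (eq_of_subset_of_card_le hsub hcard)

theorem erase_union_singleton_mem_NW (hs : s ∈ S) (ht : t ∉ S) (hSU : S ⊆ U) (htU : t ∈ U) :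
    S.erase s ∪ {t} ∈ NW S.card U := by
  have hsub : S.erase s ∪ {t} ⊆ U :=
    union_subset ((erase_subset s S).trans hSU) (singleton_subset_iff.2 htU)
  have hcard : (S.erase s ∪ {t}).card = S.card := by
    rw [union_singleton, card_insert_of_notMem (notMem_mono (erase_subset s S) ht),
      card_erase_add_one hs]
  exact ⟨hsub, hcard.trans (min_eq_left (card_le_card hSU)).symm⟩

/-- A distributional preference is responsive to a relation `r` between students if a set and the
result of replacing one of its members by an outsider compare exactly as the two students do
under `r`. -/
structure ResponsiveTo (pref : Finset α → Finset α → Prop) (r : α → α → Prop) : Prop where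
  swap_pref_iff : ∀ {S : Finset α} {s t : α}, s ∈ S → t ∉ S →
    (pref (S.erase s ∪ {t}) S ↔ r t s)
  pref_swap_iff : ∀ {S : Finset α} {s t : α}, s ∈ S → t ∉ S →
    (pref S (S.erase s ∪ {t}) ↔ r s t)

namespace ResponsiveTo

theorem swap_indiffPref_iff (h : ResponsiveTo pref r) (hs : s ∈ S) (ht : t ∉ S) :
    indiffPref pref (S.erase s ∪ {t}) S ↔ r t s ∧ r s t :=
  and_congr (h.swap_pref_iff hs ht) (h.pref_swap_iff hs ht)

theorem swap_strictPref_iff (h : ResponsiveTo pref r) (hs : s ∈ S) (ht : t ∉ S) :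
    strictPref pref (S.erase s ∪ {t}) S ↔ r t s ∧ ¬ r s t :=
  and_congr (h.swap_pref_iff hs ht) (not_congr (h.pref_swap_iff hs ht))

theorem strictPref_swap_iff (h : ResponsiveTo pref r) (hs : s ∈ S) (ht : t ∉ S) :
    strictPref pref S (S.erase s ∪ {t}) ↔ r s t ∧ ¬ r t s :=
  and_congr (h.pref_swap_iff hs ht) (not_congr (h.swap_pref_iff hs ht))

theorem maximizerProperty (h : ResponsiveTo pref r) (q : ℕ) : maximizerProperty pref q := by
  rintro S S' hne rfl hcard hmax
  obtain ⟨s, hs⟩ := sdiff_nonempty_of_ne_of_card_le hne hcard.le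
  obtain ⟨t, ht⟩ := sdiff_nonempty_of_ne_of_card_le hne.symm hcard.ge
  refine ⟨s, hs, t, ht, ?_⟩
  obtain ⟨hsS, hsS'⟩ := mem_sdiff.1 hs
  obtain ⟨htS', htS⟩ := mem_sdiff.1 ht
  have hst : r s t := (h.pref_swap_iff hsS htS).1 (hmax _ <|
    erase_union_singleton_mem_NW hsS htS subset_union_left (mem_union_right S htS')).1
  have hts : r t s := (h.pref_swap_iff htS' hsS').1 (hmax _ <| hcard ▸
    erase_union_singleton_mem_NW htS' hsS' subset_union_right (mem_union_left S' hsS)).2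
  exact ⟨(h.swap_indiffPref_iff hsS htS).2 ⟨hts, hst⟩,
    (h.swap_indiffPref_iff htS' hsS').2 ⟨hst, hts⟩⟩

theorem improvementProperty (h : ResponsiveTo pref r) (q : ℕ) : improvementProperty pref q := by
  rintro S S' rfl hcard s hs hstrict -
  obtain ⟨hsS, hsS'⟩ := mem_sdiff.1 hs
  have hne : S' ≠ S := fun heq => hsS' (heq ▸ hsS)
  obtain ⟨t, ht⟩ := sdiff_nonempty_of_ne_of_card_le hne hcard.ge
  refine ⟨t, ht, ?_⟩
  obtain ⟨htS', htS⟩ := mem_sdiff.1 ht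
  have hs_notMem : s ∉ S.erase s ∪ {t} := by
    simp [ne_of_mem_of_not_mem hsS htS]
  have hst : r s t ∧ ¬ r t s := (h.strictPref_swap_iff hsS htS).1 <| hstrict _
    (erase_union_singleton_mem_NW hsS htS subset_union_left (mem_union_right S htS')) hs_notMem
  exact (h.swap_strictPref_iff htS' hsS').2 hst

end ResponsiveTo

theorem upperBoundProperty_of_total (htotal : ∀ A B, pref A B ∨ pref B A) (q : ℕ) :
    upperBoundProperty pref q :=
  fun S S' _ _ hinc => ((htotal S S').elim hinc.1 hinc.2).elim

end Responsive

section Additive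

variable [DecidableEq α] {M : Type*} [AddCommMonoid M] (f : α → M) {S : Finset α} {s t : α}

theorem sum_erase_union_singleton_add (hs : s ∈ S) (ht : t ∉ S) :
    ∑ x ∈ S.erase s ∪ {t}, f x + f s = ∑ x ∈ S, f x + f t := by
  rw [union_singleton, sum_insert (notMem_mono (erase_subset s S) ht), add_assoc,
    sum_erase_add S f hs, add_comm]

variable [LinearOrder M] [IsOrderedCancelAddMonoid M]

theorem responsiveTo_sum :
    ResponsiveTo (fun A B : Finset α => ∑ s ∈ B, f s ≤ ∑ s ∈ A, f s) (fun s t => f t ≤ f s) where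
  swap_pref_iff {S s t} hs ht := by
    rw [← add_le_add_iff_right (f s), sum_erase_union_singleton_add f hs ht, add_le_add_iff_left]
  pref_swap_iff {S s t} hs ht := by
    rw [← add_le_add_iff_right (f s), sum_erase_union_singleton_add f hs ht, add_le_add_iff_left]

end Additive

theorem stmt12_general {α M : Type*} [DecidableEq α] [AddCommMonoid M] [LinearOrder M]
    [IsOrderedCancelAddMonoid M] (q : ℕ) (f : α → M) :
    upperBoundProperty (fun A B : Finset α => (∑ s ∈ B, f s) ≤ ∑ s ∈ A, f s) q ∧
    maximizerProperty (fun A B : Finset α => (∑ s ∈ B, f s) ≤ ∑ s ∈ A, f s) q ∧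
    improvementProperty (fun A B : Finset α => (∑ s ∈ B, f s) ≤ ∑ s ∈ A, f s) q :=
  ⟨upperBoundProperty_of_total (fun _ _ => le_total _ _) q,
    (responsiveTo_sum f).maximizerProperty q, (responsiveTo_sum f).improvementProperty q⟩

/-- The additive distributional preference induced by a value
function `f` satisfies the upper-bound, maximizer, and improvement
properties. -/
theorem stmt12 {α : Type*} [Fintype α] [Nonempty α] [DecidableEq α]
    (q : ℕ) (hq : 0 < q) (f : α → ℝ) :
    upperBoundProperty (fun A B : Finset α => (∑ s ∈ B, f s) ≤ ∑ s ∈ A, f s) q ∧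
    maximizerProperty (fun A B : Finset α => (∑ s ∈ B, f s) ≤ ∑ s ∈ A, f s) q ∧
    improvementProperty (fun A B : Finset α => (∑ s ∈ B, f s) ≤ ∑ s ∈ A, f s) q :=
  stmt12_general q f
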